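/- arXiv:2212.14330 — 2 statements merged into one kernel-verified Lean document; each statement's English description precedes it below -/
import Mathlib

section
/- Let m ∈ (0,1), α ∈ (0,1], q ≥ 2, and suppose s < max{1/2 − m/4 − (1−m)α/q, 1/2 − α/q}. Let μ be the Borel measure on ℝ given by dμ(x) = |x|^{α−1} dx restricted to (0,1). Then there is NO constant C > 0 such that (∫ (sup_{t∈(0,1)} |u_f(x,t)|)^q dμ(x))^{1/q} ≤ C ‖f‖_{H^s} holds for every Schwartz function f : ℝ → ℂ; that is, for every C > 0 there is a Schwartz function f violating the inequality. -/
open MeasureTheory Filter Set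
open scoped ENNReal NNReal

/-- Fourier transform `f̂(ξ) = ∫ e^{-ixξ} f(x) dx`. -/
noncomputable def FT (f : ℝ → ℂ) (ξ : ℝ) : ℂ :=
  ∫ x : ℝ, Complex.exp (-(Complex.I * (x : ℂ) * (ξ : ℂ))) * f x

/-- Sobolev norm `‖f‖_{H^s} = (∫ (1+ξ²)^s |f̂(ξ)|² dξ)^{1/2}` (as an extended nonnegative real). -/
noncomputable def HsNorm (s : ℝ) (f : ℝ → ℂ) : ℝ≥0∞ :=
  (∫⁻ ξ : ℝ, ENNReal.ofReal ((1 + ξ ^ 2) ^ s) * (‖FT f ξ‖₊ : ℝ≥0∞) ^ 2) ^ (1/2 : ℝ)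

/-- Truncated fractional Schrödinger wave
`S_R f(y,t) = (2π)⁻¹ ∫_{|ξ|≤R} e^{i(yξ + t|ξ|^m)} f̂(ξ) dξ`. -/
noncomputable def SR (m : ℝ) (f : ℝ → ℂ) (R y t : ℝ) : ℂ :=
  ((2 * Real.pi)⁻¹ : ℝ) *
    ∫ ξ in Set.Icc (-R) R, Complex.exp (Complex.I * ((y * ξ + t * |ξ| ^ m : ℝ) : ℂ)) * FT f ξ

/-- Fractional Schrödinger evolution
`u_f(y,t) = e^{it(−Δ)^{m/2}}f(y) = (2π)⁻¹ ∫ e^{i(yξ + t|ξ|^m)} f̂(ξ) dξ`. -/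
noncomputable def uF (m : ℝ) (f : ℝ → ℂ) (y t : ℝ) : ℂ :=
  ((2 * Real.pi)⁻¹ : ℝ) *
    ∫ ξ : ℝ, Complex.exp (Complex.I * ((y * ξ + t * |ξ| ^ m : ℝ) : ℂ)) * FT f ξ

/-! Testing the estimate on `f` with `f̂` a bump of width `r` at `A`, `|A| = N`, costs
`‖f‖_{H^s} ≈ N^s r^{1/2}`, while `|u_f(x,t)| ≳ r` wherever the phase `xξ + t|ξ|^m` is nearly
constant on the bump. If every `x ∈ (0,δ)` admits such a time `t`, then `r δ^{α/q} ≲ N^s r^{1/2}`.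
- For `r ≈ N` and `δ ≈ 1/N`, a tiny `t` will do; letting `N → ∞` gives `1/2 - α/q ≤ s`.
- For `A = -N`, choose `t ≈ x N^{1-m}` so that the phase is stationary at `A`; this is an admissible
  time for `x < δ ≈ N^{m-1}`. The second-order term is `O(1)` as long as `r ≲ N^{1-m/2}`, and
  `N → ∞` gives `1/2 - m/4 - (1-m)α/q ≤ s`. -/

open Metric Function
open scoped FourierTransform

/-- The maximal function `x ↦ sup_{0<t<1} |u_f(x,t)|` of the evolution `uF`. -/
noncomputable def maximalFn (m : ℝ) (f : ℝ → ℂ) (x : ℝ) : ℝ≥0∞ :=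
  ⨆ t ∈ Ioo (0 : ℝ) 1, (‖uF m f x t‖₊ : ℝ≥0∞)

/-- The measure `|x|^{α-1} dx` on `(0,1)`. -/
noncomputable def powerMeasure (α : ℝ) : Measure ℝ :=
  ((volume : Measure ℝ).restrict (Ioo (0 : ℝ) 1)).withDensity
    fun x => ENNReal.ofReal (|x| ^ (α - 1))

/-- The maximal estimate `‖sup_{0<t<1} |u_f(·,t)|‖_{L^q(|x|^{α-1} dx)} ≤ C ‖f‖_{H^s}` on `(0,1)`,
required of Schwartz functions only. -/
def MaximalEstimate (m α q s : ℝ) (C : ℝ≥0) : Prop :=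
  ∀ f : SchwartzMap ℝ ℂ,
    (∫⁻ x, maximalFn m f x ^ q ∂powerMeasure α) ^ (1 / q) ≤ C * HsNorm s f

/-- The frequencies in the ball `|ξ - A| ≤ r` are coherent at `x`: at some time `t ∈ (0,1)` the
phase `xξ + t|ξ|^m` stays within `1` of a constant there, so that they cannot cancel at `(x,t)`. -/
def IsCoherentAt (m A r x : ℝ) : Prop :=
  ∃ t ∈ Ioo (0 : ℝ) 1, ∃ θ : ℝ, ∀ ξ ∈ closedBall A r, |x * ξ + t * |ξ| ^ m - θ| ≤ 1

section Real

theorem rpow_le_rpow_abs_mul_rpow {K a y : ℝ} (s : ℝ) (hK : 0 < K) (ha : 0 < a)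
    (hl : a / K ≤ y) (hu : y ≤ K * a) : y ^ s ≤ K ^ |s| * a ^ s := by
  rcases le_total 0 s with hs | hs
  · rw [abs_of_nonneg hs, ← Real.mul_rpow hK.le ha.le]
    exact Real.rpow_le_rpow ((by positivity : 0 ≤ a / K).trans hl) hu hs
  · rw [abs_of_nonpos hs, Real.rpow_neg hK.le, ← div_eq_inv_mul, ← Real.div_rpow ha.le hK.le]
    exact Real.rpow_le_rpow_of_nonpos (by positivity) hl hs

theorem one_add_sq_rpow_le {A r ξ : ℝ} (s : ℝ) (hA : 1 ≤ |A|) (hr : r ≤ |A| / 2)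
    (hξ : ξ ∈ closedBall A r) : (1 + ξ ^ 2) ^ s ≤ (2 ^ |s| * |A| ^ s) ^ 2 := by
  have hdist : |ξ - A| ≤ |A| / 2 := hξ.trans hr
  have hlower : |A| / 2 ≤ |ξ| := by linarith [abs_sub_abs_le_abs_sub A ξ, abs_sub_comm A ξ]
  have hupper : |ξ| ≤ 3 / 2 * |A| := by linarith [abs_sub_abs_le_abs_sub ξ A]
  calc (1 + ξ ^ 2) ^ s ≤ (2 ^ 2) ^ |s| * (|A| ^ 2) ^ s := by
        rw [← sq_abs ξ]
        apply rpow_le_rpow_abs_mul_rpow s (by norm_num) (by positivity) <;> nlinarith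
    _ = (2 ^ |s| * |A| ^ s) ^ 2 := by
        rw [mul_pow, Real.rpow_pow_comm (by norm_num), Real.rpow_pow_comm (abs_nonneg A)]

theorem one_add_mul_sub_sq_le_rpow_one_add {m v : ℝ} (hm : 0 < m) (hm1 : m ≤ 1) (hv : -1 ≤ v) :
    1 + m * v - v ^ 2 ≤ (1 + v) ^ m := by
  rcases hv.eq_or_lt with rfl | hv
  · norm_num [Real.zero_rpow hm.ne', hm.le]
  have hbernoulli : (1 + v) ^ (1 - m) ≤ 1 + (1 - m) * v :=
    rpow_one_add_le_one_add_mul_self hv.le (by linarith) (by linarith)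
  have hpos : 0 < 1 + (1 - m) * v := by nlinarith
  refine le_of_mul_le_mul_right ?_ hpos
  calc (1 + m * v - v ^ 2) * (1 + (1 - m) * v) ≤ 1 + v := by
        nlinarith [mul_nonneg (sq_nonneg v) (by nlinarith : 0 ≤ 1 + (1 - m) * v - m * (1 - m))]
    _ = (1 + v) ^ m * (1 + v) ^ (1 - m) := by rw [← Real.rpow_add (by linarith)]; simp
    _ ≤ (1 + v) ^ m * (1 + (1 - m) * v) :=
        mul_le_mul_of_nonneg_left hbernoulli (Real.rpow_nonneg (by linarith) m)

theorem abs_rpow_sub_tangent_le {m N y : ℝ} (hm : 0 < m) (hm1 : m ≤ 1) (hN : 0 < N)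
    (hy : 0 ≤ y) :
    |y ^ m - (N ^ m + m * N ^ (m - 1) * (y - N))| ≤ N ^ (m - 2) * (y - N) ^ 2 := by
  obtain ⟨v, rfl⟩ : ∃ v, y = N * (1 + v) := ⟨y / N - 1, by field_simp; ring⟩
  have hv : 0 ≤ 1 + v := nonneg_of_mul_nonneg_right hy hN
  have hunit : |(1 + v) ^ m - (1 + m * v)| ≤ v ^ 2 := abs_le.2
    ⟨by linarith [one_add_mul_sub_sq_le_rpow_one_add hm hm1 (by linarith : -1 ≤ v)],
      by linarith [rpow_one_add_le_one_add_mul_self (by linarith : -1 ≤ v) hm.le hm1, sq_nonneg v]⟩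
  have hpow1 : N ^ (m - 1) * N = N ^ m := by rw [← Real.rpow_add_one hN.ne', sub_add_cancel]
  have hpow2 : N ^ (m - 2) * N ^ 2 = N ^ m := by
    rw [← Real.rpow_add_natCast hN.ne']; norm_num
  calc |(N * (1 + v)) ^ m - (N ^ m + m * N ^ (m - 1) * (N * (1 + v) - N))|
      = |N ^ m * ((1 + v) ^ m - (1 + m * v))| := by
        rw [Real.mul_rpow hN.le hv]
        congr 1
        linear_combination -(m * v) * hpow1
    _ = N ^ m * |(1 + v) ^ m - (1 + m * v)| := by rw [abs_mul, abs_of_pos (by positivity)]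
    _ ≤ N ^ m * v ^ 2 := by gcongr
    _ = N ^ (m - 2) * (N * (1 + v) - N) ^ 2 := by linear_combination -(v ^ 2) * hpow2

theorem exponent_le_of_eventually_mul_rpow_le {a b c K : ℝ} (hc : 0 < c)
    (h : ∀ᶠ N : ℝ in atTop, c * N ^ a ≤ K * N ^ b) : a ≤ b := by
  by_contra! hba
  obtain ⟨N, hN, hle, hlarge⟩ := ((eventually_gt_atTop 0).and (h.and
    ((tendsto_rpow_atTop (sub_pos.2 hba)).eventually_gt_atTop (K / c)))).exists
  rw [div_lt_iff₀' hc, Real.rpow_sub hN, ← mul_div_assoc, lt_div_iff₀ (by positivity)] at hlarge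
  exact hlarge.not_ge hle

end Real

section Measure

theorem mul_measure_rpow_le_lintegral_rpow {X : Type*} [MeasurableSpace X] {μ : Measure X}
    {F : X → ℝ≥0∞} {S : Set X} {c : ℝ≥0∞} {q : ℝ} (hq : 0 < q) (hS : MeasurableSet S)
    (hF : ∀ x ∈ S, c ≤ F x) : c * μ S ^ (1 / q) ≤ (∫⁻ x, F x ^ q ∂μ) ^ (1 / q) := by
  calc c * μ S ^ (1 / q) = (∫⁻ _ in S, c ^ q ∂μ) ^ (1 / q) := by
        rw [setLIntegral_const, ENNReal.mul_rpow_of_nonneg _ _ (by positivity), one_div,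
          ENNReal.rpow_rpow_inv hq.ne']
    _ ≤ (∫⁻ x in S, F x ^ q ∂μ) ^ (1 / q) := by
        gcongr ?_ ^ _
        exact setLIntegral_mono' hS fun x hx => ENNReal.rpow_le_rpow (hF x hx) hq.le
    _ ≤ (∫⁻ x, F x ^ q ∂μ) ^ (1 / q) := by
        gcongr ?_ ^ _
        exact setLIntegral_le_lintegral S _

theorem powerMeasure_Ioo {α δ : ℝ} (hα : 0 < α) (hδ : 0 ≤ δ) (hδ1 : δ ≤ 1) :
    powerMeasure α (Ioo 0 δ) = ENNReal.ofReal (δ ^ α / α) := by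
  have hexp : -1 < α - 1 := by linarith
  have hint : IntegrableOn (fun x : ℝ => x ^ (α - 1)) (Ioo 0 δ) :=
    (intervalIntegral.intervalIntegrable_rpow' hexp).1.mono_set Ioo_subset_Ioc_self
  calc powerMeasure α (Ioo 0 δ) = ∫⁻ x in Ioo 0 δ, ENNReal.ofReal (|x| ^ (α - 1)) := by
        rw [powerMeasure, withDensity_apply _ measurableSet_Ioo,
          Measure.restrict_restrict measurableSet_Ioo,
          inter_eq_left.2 (Ioo_subset_Ioo_right hδ1)]
    _ = ∫⁻ x in Ioo 0 δ, ENNReal.ofReal (x ^ (α - 1)) :=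
        setLIntegral_congr_fun measurableSet_Ioo fun x hx => by simp only [abs_of_pos hx.1]
    _ = ENNReal.ofReal (∫ x in Ioo 0 δ, x ^ (α - 1)) :=
        (ofReal_integral_eq_lintegral_ofReal hint ((ae_restrict_mem measurableSet_Ioo).mono
          fun x hx => Real.rpow_nonneg hx.1.le _)).symm
    _ = ENNReal.ofReal (δ ^ α / α) := by
        rw [← integral_Ioc_eq_integral_Ioo, ← intervalIntegral.integral_of_le hδ,
          integral_rpow (Or.inl hexp), sub_add_cancel, Real.zero_rpow hα.ne', sub_zero]

theorem integral_div_two_le_norm_integral_exp_mul {X : Type*} [MeasurableSpace X] {μ : Measure X}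
    {φ g : X → ℝ} {θ : ℝ} (hφ : AEStronglyMeasurable φ μ) (hg : Integrable g μ)
    (hg0 : ∀ x, 0 ≤ g x) (hθ : ∀ x ∈ support g, |φ x - θ| ≤ 1) :
    (∫ x, g x ∂μ) / 2 ≤ ‖∫ x, Complex.exp (Complex.I * φ x) * g x ∂μ‖ := by
  have hint : Integrable (fun x => Complex.exp ((φ x - θ : ℝ) * Complex.I) * g x) μ := by
    refine hg.ofReal.bdd_mul (c := 1) ?_ (ae_of_all _ fun x => ?_)
    · exact Complex.continuous_exp.comp_aestronglyMeasurable
        ((Complex.continuous_ofReal.comp_aestronglyMeasurable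
          (hφ.sub aestronglyMeasurable_const)).mul_const _)
    · rw [Complex.norm_exp_ofReal_mul_I]
  have hre (x) : (Complex.exp ((φ x - θ : ℝ) * Complex.I) * g x).re = Real.cos (φ x - θ) * g x := by
    rw [Complex.re_mul_ofReal, Complex.exp_ofReal_mul_I_re]
  have hcos (x) : g x / 2 ≤ Real.cos (φ x - θ) * g x := by
    by_cases hx : x ∈ support g
    · have hsq : (φ x - θ) ^ 2 ≤ 1 := (sq_le_one_iff_abs_le_one _).2 (hθ x hx)
      nlinarith [Real.one_sub_sq_div_two_le_cos (x := φ x - θ), hg0 x]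
    · simp [notMem_support.1 hx]
  calc (∫ x, g x ∂μ) / 2 = ∫ x, g x / 2 ∂μ := (integral_div _ _).symm
    _ ≤ ∫ x, (Complex.exp ((φ x - θ : ℝ) * Complex.I) * g x).re ∂μ :=
        integral_mono (hg.div_const 2) hint.re fun x => (hcos x).trans_eq (hre x).symm
    _ = (∫ x, Complex.exp ((φ x - θ : ℝ) * Complex.I) * g x ∂μ).re := integral_re hint
    _ ≤ ‖∫ x, Complex.exp ((φ x - θ : ℝ) * Complex.I) * g x ∂μ‖ := Complex.re_le_norm _
    _ = ‖Complex.exp ((-θ : ℝ) * Complex.I) * ∫ x, Complex.exp (Complex.I * φ x) * g x ∂μ‖ := by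
        rw [← integral_const_mul]
        simp_rw [← mul_assoc, ← Complex.exp_add]
        congr! 5
        push_cast
        ring
    _ = ‖∫ x, Complex.exp (Complex.I * φ x) * g x ∂μ‖ := by
        rw [norm_mul, Complex.norm_exp_ofReal_mul_I, one_mul]

end Measure

section WavePacket

variable {m A r s x : ℝ}

theorem FT_eq_fourier (f : ℝ → ℂ) (ξ : ℝ) : FT f ξ = 𝓕 f (ξ / (2 * Real.pi)) := by
  rw [FT, Real.fourier_real_eq_integral_exp_smul]
  congr! 3 with y
  have hphase : -2 * Real.pi * y * (ξ / (2 * Real.pi)) = -(y * ξ) := by field_simp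
  rw [hphase]
  congr 1
  push_cast
  ring

theorem exists_schwartz_FT_eq (g : SchwartzMap ℝ ℂ) :
    ∃ f : SchwartzMap ℝ ℂ, ∀ ξ, FT f ξ = g ξ := by
  have hpi : 2 * Real.pi ≠ 0 := Real.two_pi_pos.ne'
  let dilation : ℝ ≃L[ℝ] ℝ := ContinuousLinearEquiv.unitsEquivAut ℝ (Units.mk0 _ hpi)
  let g' : SchwartzMap ℝ ℂ := SchwartzMap.compCLMOfContinuousLinearEquiv ℂ dilation g
  refine ⟨𝓕⁻ g', fun ξ => ?_⟩
  rw [FT_eq_fourier, ← SchwartzMap.fourier_coe, FourierTransform.fourier_fourierInv_eq]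
  exact congrArg g (div_mul_cancel₀ ξ hpi)

theorem exists_schwartz_FT_eq_contDiffBump (b : ContDiffBump A) :
    ∃ f : SchwartzMap ℝ ℂ, ∀ ξ, FT f ξ = (b ξ : ℝ) :=
  exists_schwartz_FT_eq ((b.hasCompactSupport.comp_left Complex.ofReal_zero).toSchwartzMap
    (Complex.ofRealCLM.contDiff.comp b.contDiff))

theorem IsCoherentAt.ofReal_integral_le_maximalFn (hx : IsCoherentAt m A r x) {f : ℝ → ℂ}
    {g : ℝ → ℝ} (hg : Integrable g) (hg0 : ∀ ξ, 0 ≤ g ξ) (hsupp : support g ⊆ closedBall A r)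
    (hf : ∀ ξ, FT f ξ = g ξ) :
    ENNReal.ofReal ((∫ ξ, g ξ) / (4 * Real.pi)) ≤ maximalFn m f x := by
  obtain ⟨t, ht, θ, hθ⟩ := hx
  have hphase : Measurable fun ξ : ℝ => x * ξ + t * |ξ| ^ m := by fun_prop
  have hwave : (∫ ξ, g ξ) / (4 * Real.pi) ≤ ‖uF m f x t‖ := by
    simp_rw [uF, hf, norm_mul, Complex.norm_real,
      Real.norm_of_nonneg (inv_nonneg.2 Real.two_pi_pos.le)]
    calc (∫ ξ, g ξ) / (4 * Real.pi) = (2 * Real.pi)⁻¹ * ((∫ ξ, g ξ) / 2) := by ring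
      _ ≤ _ := by
        gcongr
        exact integral_div_two_le_norm_integral_exp_mul hphase.aestronglyMeasurable hg hg0
          fun ξ hξ => hθ ξ (hsupp hξ)
  calc ENNReal.ofReal ((∫ ξ, g ξ) / (4 * Real.pi)) ≤ ENNReal.ofReal ‖uF m f x t‖ :=
        ENNReal.ofReal_le_ofReal hwave
    _ = (‖uF m f x t‖₊ : ℝ≥0∞) := ofReal_norm _
    _ ≤ maximalFn m f x := le_iSup₂ (f := fun t _ => (‖uF m f x t‖₊ : ℝ≥0∞)) t ht

theorem exists_wavePacket (A : ℝ) (hr : 0 < r) :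
    ∃ f : SchwartzMap ℝ ℂ, (∀ ξ, ‖FT f ξ‖ ≤ (closedBall A r).indicator 1 ξ) ∧
      ∀ m x, IsCoherentAt m A r x → ENNReal.ofReal (r / (4 * Real.pi)) ≤ maximalFn m f x := by
  let b : ContDiffBump A := ⟨r / 2, r, by positivity, by linarith⟩
  have hsupp : support b ⊆ closedBall A r := b.support_eq ▸ ball_subset_closedBall
  obtain ⟨f, hf⟩ := exists_schwartz_FT_eq_contDiffBump b
  refine ⟨f, fun ξ => ?_, fun m x hx => ?_⟩
  · rw [hf, Complex.norm_real, Real.norm_of_nonneg b.nonneg]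
    exact le_indicator_apply (fun _ => b.le_one) fun hξ => (notMem_support.1 (mt (@hsupp ξ) hξ)).le
  · have hmass : r ≤ ∫ ξ, b ξ := by
      calc r = volume.real (closedBall A b.rIn) := by
            rw [Real.volume_real_closedBall b.rIn_pos.le, mul_div_cancel₀ r two_ne_zero]
        _ ≤ ∫ ξ, b ξ := b.measure_closedBall_le_integral volume
    refine le_trans ?_ (hx.ofReal_integral_le_maximalFn b.integrable (fun _ => b.nonneg) hsupp hf)
    gcongr

theorem HsNorm_le_of_norm_FT_le_indicator {f : ℝ → ℂ} {M : ℝ} (hM : 0 ≤ M) (hr : 0 ≤ r)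
    (hf : ∀ ξ, ‖FT f ξ‖ ≤ (closedBall A r).indicator 1 ξ)
    (hweight : ∀ ξ ∈ closedBall A r, (1 + ξ ^ 2) ^ s ≤ M ^ 2) :
    HsNorm s f ≤ ENNReal.ofReal (M * √(2 * r)) := by
  have hpoint (ξ) : ENNReal.ofReal ((1 + ξ ^ 2) ^ s) * (‖FT f ξ‖₊ : ℝ≥0∞) ^ 2 ≤
      (closedBall A r).indicator (fun _ => ENNReal.ofReal (M ^ 2)) ξ := by
    have hξ := hf ξ
    by_cases hmem : ξ ∈ closedBall A r
    · rw [indicator_of_mem hmem] at hξ ⊢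
      have hone : (‖FT f ξ‖₊ : ℝ≥0∞) ≤ 1 := by exact_mod_cast hξ
      calc _ ≤ ENNReal.ofReal (M ^ 2) * 1 ^ 2 := by gcongr; exact hweight ξ hmem
        _ = ENNReal.ofReal (M ^ 2) := by rw [one_pow, mul_one]
    · rw [indicator_of_notMem hmem] at hξ ⊢
      simp [norm_le_zero_iff.1 hξ]
  calc HsNorm s f ≤ (∫⁻ ξ, (closedBall A r).indicator
          (fun _ => ENNReal.ofReal (M ^ 2)) ξ) ^ (1 / 2 : ℝ) :=
        ENNReal.rpow_le_rpow (lintegral_mono hpoint) (by norm_num)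
    _ = ENNReal.ofReal (M ^ 2 * (2 * r)) ^ (1 / 2 : ℝ) := by
        rw [lintegral_indicator measurableSet_closedBall, setLIntegral_const,
          Real.volume_closedBall, ENNReal.ofReal_mul (sq_nonneg M)]
    _ = ENNReal.ofReal (M * √(2 * r)) := by
        rw [ENNReal.ofReal_rpow_of_nonneg (by positivity) (by norm_num), ← Real.sqrt_eq_rpow,
          Real.sqrt_mul (sq_nonneg M), Real.sqrt_sq hM]

end WavePacket

section Coherence

variable {m A N r x : ℝ}

theorem isCoherentAt_of_abs_mul_le (hm : 0 ≤ m) (hr : 0 ≤ r) (hx : |x| * (|A| + r) ≤ 1 / 2) :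
    IsCoherentAt m A r x := by
  set R := |A| + r
  have hR : 0 ≤ R ^ m := by positivity
  refine ⟨1 / (2 * (1 + R ^ m)), ⟨by positivity, ?_⟩, 0, fun ξ hξ => ?_⟩
  · rw [div_lt_one (by positivity)]
    linarith
  have hξR : |ξ| ≤ R := by
    have hdist : |ξ - A| ≤ r := hξ
    linarith [abs_sub_abs_le_abs_sub ξ A]
  have hspace : |x * ξ| ≤ 1 / 2 := by
    rw [abs_mul]
    exact (by gcongr : |x| * |ξ| ≤ |x| * R).trans hx
  have htime : 1 / (2 * (1 + R ^ m)) * |ξ| ^ m ≤ 1 / 2 := by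
    calc _ ≤ 1 / (2 * (1 + R ^ m)) * R ^ m := by gcongr
      _ ≤ 1 / 2 := by
        rw [one_div_mul_eq_div, div_le_iff₀ (by positivity)]
        linarith
  have htime0 : 0 ≤ 1 / (2 * (1 + R ^ m)) * |ξ| ^ m := by positivity
  rw [sub_zero]
  exact (abs_add_le _ _).trans (by rw [abs_of_nonneg htime0]; linarith)

theorem isCoherentAt_neg_of_mul_sq_le (hm : 0 < m) (hm1 : m ≤ 1) (hN : 0 < N) (hrN : r ≤ N)
    (hr : N ^ (m - 2) * r ^ 2 ≤ 1) (hx : x ∈ Ioo 0 (m * N ^ (m - 1))) :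
    IsCoherentAt m (-N) r x := by
  -- At this time the `ξ`-derivative of the phase vanishes at `ξ = -N`.
  obtain ⟨t, ht⟩ : ∃ t, t * (m * N ^ (m - 1)) = x := ⟨_, div_mul_cancel₀ x (by positivity)⟩
  have hslope : 0 < m * N ^ (m - 1) := by positivity
  have ht0 : 0 < t := pos_of_mul_pos_left (ht ▸ hx.1) hslope.le
  have ht1 : t < 1 := lt_of_mul_lt_mul_right (by linarith [hx.2]) hslope.le
  refine ⟨t, ⟨ht0, ht1⟩, t * N ^ m - x * N, fun ξ hξ => ?_⟩
  have hdist : |-ξ - N| ≤ r := by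
    rw [show -ξ - N = -N - ξ by ring, abs_sub_comm]
    exact hξ
  have hξ0 : 0 ≤ -ξ := by linarith [(abs_le.1 hdist).1]
  calc |x * ξ + t * |ξ| ^ m - (t * N ^ m - x * N)|
      = |t * ((-ξ) ^ m - (N ^ m + m * N ^ (m - 1) * (-ξ - N)))| := by
        rw [← abs_neg ξ, abs_of_nonneg hξ0]
        congr 1
        linear_combination -(ξ + N) * ht
    _ = t * |(-ξ) ^ m - (N ^ m + m * N ^ (m - 1) * (-ξ - N))| := by rw [abs_mul, abs_of_pos ht0]
    _ ≤ 1 * (N ^ (m - 2) * (-ξ - N) ^ 2) := by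
        gcongr
        exact abs_rpow_sub_tangent_le hm hm1 hN hξ0
    _ ≤ 1 * (N ^ (m - 2) * r ^ 2) := by
        rw [← sq_abs (-ξ - N)]
        gcongr
    _ ≤ 1 := by rwa [one_mul]

end Coherence

namespace MaximalEstimate

variable {m α q s : ℝ} {C : ℝ≥0}

theorem mul_rpow_le_of_isCoherentAt (h : MaximalEstimate m α q s C) (hα : 0 < α) (hq : 0 < q)
    {A r δ : ℝ} (hA : 1 ≤ |A|) (hr : 0 < r) (hrA : r ≤ |A| / 2) (hδ : 0 < δ) (hδ1 : δ ≤ 1)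
    (hcoh : ∀ x ∈ Ioo 0 δ, IsCoherentAt m A r x) :
    r / (4 * Real.pi) * (δ ^ α / α) ^ (1 / q) ≤ C * (2 ^ |s| * |A| ^ s * √(2 * r)) := by
  obtain ⟨f, hFT, hlarge⟩ := exists_wavePacket A hr
  have hchain := calc
    ENNReal.ofReal (r / (4 * Real.pi) * (δ ^ α / α) ^ (1 / q))
      = ENNReal.ofReal (r / (4 * Real.pi)) * powerMeasure α (Ioo 0 δ) ^ (1 / q) := by
        rw [powerMeasure_Ioo hα hδ.le hδ1, ENNReal.ofReal_rpow_of_nonneg (by positivity)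
          (by positivity), ENNReal.ofReal_mul (by positivity)]
    _ ≤ (∫⁻ x, maximalFn m f x ^ q ∂powerMeasure α) ^ (1 / q) :=
        mul_measure_rpow_le_lintegral_rpow hq measurableSet_Ioo
          fun x hx => hlarge m x (hcoh x hx)
    _ ≤ C * HsNorm s f := h f
    _ ≤ C * ENNReal.ofReal (2 ^ |s| * |A| ^ s * √(2 * r)) := by
        gcongr
        exact HsNorm_le_of_norm_FT_le_indicator (by positivity) hr.le hFT
          fun ξ => one_add_sq_rpow_le s hA hrA
    _ = ENNReal.ofReal (C * (2 ^ |s| * |A| ^ s * √(2 * r))) := by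
        rw [ENNReal.ofReal_mul C.coe_nonneg, ENNReal.ofReal_coe_nnreal]
  exact (ENNReal.ofReal_le_ofReal_iff (by positivity)).1 hchain

theorem exponent_le_of_isCoherentAt (h : MaximalEstimate m α q s C) (hα : 0 < α) (hq : 0 < q)
    {w β d : ℝ} (hw : w ≤ 1) (hβ : β ≤ 0) (hd : 0 < d) (hd1 : d ≤ 1)
    (hcoh : ∀ N : ℝ, 1 ≤ N →
      ∃ A, |A| = N ∧ ∀ x ∈ Ioo 0 (d * N ^ β), IsCoherentAt m A (N ^ w / 2) x) :
    w / 2 + β * α / q ≤ s := by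
  have hbound : ∀ᶠ N : ℝ in atTop, 1 / (8 * Real.pi) * (d ^ α / α) ^ (1 / q) *
      N ^ (w + β * α / q) ≤ C * 2 ^ |s| * N ^ (s + w / 2) := by
    filter_upwards [eventually_ge_atTop 1] with N hN
    have hN0 : 0 < N := by linarith
    obtain ⟨A, hA, hx⟩ := hcoh N hN
    have hwN : N ^ w ≤ N := Real.rpow_le_self_of_one_le hN hw
    have hδ1 : d * N ^ β ≤ 1 :=
      mul_le_one₀ hd1 (by positivity) (Real.rpow_le_one_of_one_le_of_nonpos hN hβ)
    have hδpow : ((d * N ^ β) ^ α / α) ^ (1 / q) = (d ^ α / α) ^ (1 / q) * N ^ (β * α / q) := by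
      rw [Real.mul_rpow hd.le (by positivity), ← Real.rpow_mul hN0.le, mul_div_right_comm,
        Real.mul_rpow (by positivity) (by positivity), ← Real.rpow_mul hN0.le, mul_one_div]
    have hsqrt : √(2 * (N ^ w / 2)) = N ^ (w / 2) := by
      rw [mul_div_cancel₀ _ two_ne_zero, Real.sqrt_eq_rpow, ← Real.rpow_mul hN0.le, mul_one_div]
    have hest := h.mul_rpow_le_of_isCoherentAt hα hq (hN.trans_eq hA.symm) (by positivity)
      (by rw [hA]; linarith) (by positivity) hδ1 hx
    rw [hA, hδpow, hsqrt] at hest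
    calc _ = N ^ w / 2 / (4 * Real.pi) * ((d ^ α / α) ^ (1 / q) * N ^ (β * α / q)) := by
          rw [Real.rpow_add hN0]; ring
      _ ≤ C * (2 ^ |s| * N ^ s * N ^ (w / 2)) := hest
      _ = _ := by rw [Real.rpow_add hN0]; ring
  linarith [exponent_le_of_eventually_mul_rpow_le (by positivity) hbound]

theorem one_half_sub_le (h : MaximalEstimate m α q s C) (hm : 0 ≤ m) (hα : 0 < α) (hq : 0 < q) :
    1 / 2 - α / q ≤ s := by
  have hexp := h.exponent_le_of_isCoherentAt hα hq (w := 1) (β := -1) (d := 1 / 3) le_rfl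
    (by norm_num) (by norm_num) (by norm_num) fun N hN => by
      have hN0 : 0 < N := by linarith
      refine ⟨N, abs_of_pos hN0, fun x hx => ?_⟩
      refine isCoherentAt_of_abs_mul_le hm (by positivity) ?_
      rw [Real.rpow_neg_one, ← div_eq_mul_inv, mem_Ioo, lt_div_iff₀ hN0] at hx
      rw [abs_of_pos hx.1, abs_of_pos hN0, Real.rpow_one]
      linarith
  have hsign : -1 * α / q = -(α / q) := by ring
  linarith

theorem one_half_sub_sub_le (h : MaximalEstimate m α q s C) (hm : 0 < m) (hm1 : m ≤ 1)
    (hα : 0 < α) (hq : 0 < q) : 1 / 2 - m / 4 - (1 - m) * α / q ≤ s := by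
  have hexp := h.exponent_le_of_isCoherentAt hα hq (w := 1 - m / 2) (β := m - 1) (d := m)
    (by linarith) (by linarith) hm hm1 fun N hN => by
      have hN0 : 0 < N := by linarith
      refine ⟨-N, by rw [abs_neg, abs_of_pos hN0], fun x hx => ?_⟩
      have hwN : N ^ (1 - m / 2) ≤ N := Real.rpow_le_self_of_one_le hN (by linarith)
      refine isCoherentAt_neg_of_mul_sq_le hm hm1 hN0 (by linarith) ?_ hx
      have hcancel : N ^ (m - 2) * (N ^ (1 - m / 2)) ^ 2 = 1 := by
        rw [← Real.rpow_mul_natCast hN0.le, ← Real.rpow_add hN0]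
        ring_nf
        exact Real.rpow_zero N
      linarith [hcancel, div_pow (N ^ (1 - m / 2)) 2 2]
  have hsign : (m - 1) * α / q = -((1 - m) * α / q) := by ring
  linarith

end MaximalEstimate

theorem stmt2_general (m α q s : ℝ) (hm : 0 < m) (hm1 : m ≤ 1) (hα : 0 < α) (hq : 0 < q)
    (hs : s < max (1 / 2 - m / 4 - (1 - m) * α / q) (1 / 2 - α / q)) :
    ¬ ∃ C : ℝ≥0, MaximalEstimate m α q s C := by
  rintro ⟨C, h⟩
  exact hs.not_ge (max_le (h.one_half_sub_sub_le hm hm1 hα hq) (h.one_half_sub_le hm.le hα hq))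

/-- Sharpness of the maximal estimate along a vertical line: if
`s < max{1/2 − m/4 − (1−m)α/q, 1/2 − α/q}`, then no constant `C` works for the measure
`dμ(x) = |x|^{α−1} dx` restricted to `(0,1)`. -/
theorem stmt2 (m α q s : ℝ) (hm : 0 < m) (hm1 : m < 1) (hα : 0 < α) (hα1 : α ≤ 1)
    (hq : 2 ≤ q)
    (hs : s < max (1 / 2 - m / 4 - (1 - m) * α / q) (1 / 2 - α / q)) :
    ¬ ∃ C > 0, ∀ f : SchwartzMap ℝ ℂ,
      (∫⁻ x : ℝ, (⨆ t ∈ Set.Ioo (0:ℝ) 1, (‖uF m (⇑f) x t‖₊ : ℝ≥0∞)) ^ q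
          ∂(((volume : Measure ℝ).restrict (Set.Ioo (0:ℝ) 1)).withDensity
              fun x => ENNReal.ofReal (|x| ^ (α - 1)))) ^ (1 / q) ≤
        ENNReal.ofReal C * HsNorm s (⇑f) := by
  rintro ⟨C, -, h⟩
  exact stmt2_general m α q s hm hm1.le hα (by linarith) hs ⟨C.toNNReal, h⟩
end

section
/- Let m ∈ (0,1), q ≥ 2, r ∈ (0, 1/2), and set β = log 2 / log(1/r). Let Θ ⊆ [0,1] be the r-Cantor set Θ = {∑_{n=0}^∞ ε_n (1−r) r^n : ε : ℕ → {0,1}}. If s < 1/2 − m/q + mβ/q, then there is NO constant C > 0 such that (∫_0^1 (sup_{t∈(0,1), θ∈Θ} |u_f(x − θ t, t)|)^q dx)^{1/q} ≤ C ‖f‖_{H^s} holds for every Schwartz function f : ℝ → ℂ. -/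
open MeasureTheory Filter Set
open scoped ENNReal NNReal

/-!
A wave whose Fourier transform is `e^{-i|ξ|^m/2}` times a bump living on `[R/2, R]` focuses at the
origin at time `1/2`: there is no cancellation in `u_f(0, t)`, which has size `R`, as long as
`|t - 1/2| ≤ R^{-m} =: δ`. Following the line of slope `θ` back from the origin at these times, the
maximal function is of size `R` on an interval of length about `δ` starting at `θ/2`, and for
`δ`-separated slopes these intervals are disjoint. If `Θ` contains about `δ^{-β}` separated slopes,
the left side of the estimate is therefore at least `R (δ^{1-β})^{1/q}`, while
`‖f‖_{H^s} ≲ R^{s+1/2}`; letting `R → ∞` forces `s ≥ 1/2 - m/q + mβ/q`. The `k`-th generation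
endpoints of the `r`-Cantor set are `2^k = (r^k)^{-β}` points separated by `r^k`.
-/

open scoped Topology

/-- The maximal function `x ↦ sup_{t ∈ (0,1), θ ∈ Θ} |u_f(x - θ t, t)|` along the lines with slopes
in `Θ`, in extended nonnegative reals so that the supremum always exists. -/
noncomputable def lineMaximal (m : ℝ) (Θ : Set ℝ) (f : ℝ → ℂ) (x : ℝ) : ℝ≥0∞ :=
  ⨆ t ∈ Ioo (0 : ℝ) 1, ⨆ θ ∈ Θ, (‖uF m f (x - θ * t) t‖₊ : ℝ≥0∞)

/-- The `H^s → L^q(0,1)` maximal estimate along the slopes `Θ`, with constant `C`, for Schwartz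
functions. -/
def LineMaximalEstimate (m q s : ℝ) (Θ : Set ℝ) (C : ℝ) : Prop :=
  ∀ f : SchwartzMap ℝ ℂ,
    (∫⁻ x in Ioo (0 : ℝ) 1, lineMaximal m Θ f x ^ q) ^ (1 / q) ≤ ENNReal.ofReal C * HsNorm s f

/-- The `r`-Cantor set, as the set of sums `∑ εₙ (1 - r) rⁿ` with digits `εₙ ∈ {0, 1}`. -/
def rCantorSet (r : ℝ) : Set ℝ :=
  {y | ∃ a : ℕ → Bool, y = ∑' n : ℕ, (if a n then (1 - r) * r ^ n else 0)}

section TestFunctions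

lemma half_integral_le_norm_integral_exp_mul {α : Type*} [MeasurableSpace α] {μ : Measure α}
    {p ψ : α → ℝ} (hp : AEStronglyMeasurable p μ) (hψ : Integrable ψ μ) (hψ0 : 0 ≤ ψ)
    (hpψ : ∀ x, ψ x ≠ 0 → |p x| ≤ 1) :
    (∫ x, ψ x ∂μ) / 2 ≤ ‖∫ x, Complex.exp (p x * Complex.I) * ψ x ∂μ‖ := by
  have hmeas : AEStronglyMeasurable (fun x ↦ Complex.exp (p x * Complex.I)) μ :=
    (by fun_prop : Continuous fun y : ℝ ↦ Complex.exp (y * Complex.I)).comp_aestronglyMeasurable hp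
  have hint : Integrable (fun x ↦ Complex.exp (p x * Complex.I) * ψ x) μ :=
    hψ.ofReal.bdd_mul hmeas (.of_forall fun x ↦ (Complex.norm_exp_ofReal_mul_I (p x)).le)
  have hre (x : α) : ψ x / 2 ≤ (Complex.exp (p x * Complex.I) * ψ x).re := by
    rw [Complex.re_mul_ofReal, Complex.exp_ofReal_mul_I_re]
    rcases eq_or_ne (ψ x) 0 with hx | hx
    · simp [hx]
    · have hcos : 1 / 2 ≤ Real.cos (p x) := by
        have := Real.one_sub_sq_div_two_le_cos (x := p x)
        have := (sq_le_one_iff_abs_le_one _).2 (hpψ x hx)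
        linarith
      have := mul_le_mul_of_nonneg_right hcos (hψ0 x)
      linarith
  calc (∫ x, ψ x ∂μ) / 2 = ∫ x, ψ x / 2 ∂μ := (integral_div _ _).symm
    _ ≤ ∫ x, (Complex.exp (p x * Complex.I) * ψ x).re ∂μ :=
        integral_mono (hψ.div_const 2) hint.re hre
    _ = (∫ x, Complex.exp (p x * Complex.I) * ψ x ∂μ).re := integral_re hint
    _ ≤ _ := Complex.re_le_norm _

lemma integral_div_le_norm_uF_zero {m t₀ t : ℝ} {f : ℝ → ℂ} {φ : ℝ → ℝ} (hφ : Integrable φ)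
    (hφ0 : 0 ≤ φ)
    (hf : ∀ ξ, FT f ξ = Complex.exp ((-(t₀ * |ξ| ^ m) : ℝ) * Complex.I) * φ ξ)
    (ht : ∀ ξ, φ ξ ≠ 0 → |(t - t₀) * |ξ| ^ m| ≤ 1) :
    (∫ ξ, φ ξ) / (4 * Real.pi) ≤ ‖uF m f 0 t‖ := by
  have hphase (ξ : ℝ) : Complex.exp (Complex.I * ((0 * ξ + t * |ξ| ^ m : ℝ) : ℂ)) * FT f ξ =
      Complex.exp (((t - t₀) * |ξ| ^ m : ℝ) * Complex.I) * φ ξ := by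
    rw [hf, ← mul_assoc, ← Complex.exp_add]
    congr 2
    push_cast
    ring
  have hmeas : AEStronglyMeasurable (fun ξ : ℝ ↦ (t - t₀) * |ξ| ^ m) :=
    Measurable.aestronglyMeasurable (by fun_prop)
  rw [uF, integral_congr_ae (.of_forall hphase), norm_mul, Complex.norm_real,
    Real.norm_of_nonneg (by positivity)]
  calc (∫ ξ, φ ξ) / (4 * Real.pi) = (2 * Real.pi)⁻¹ * ((∫ ξ, φ ξ) / 2) := by ring
    _ ≤ _ := by
      gcongr
      exact half_integral_le_norm_integral_exp_mul hmeas hφ hφ0 ht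

open FourierTransform in
lemma exists_schwartzMap_FT_eq {g : ℝ → ℂ} (hg : ContDiff ℝ ((⊤ : ℕ∞) : WithTop ℕ∞) g)
    (hc : HasCompactSupport g) : ∃ f : SchwartzMap ℝ ℂ, ∀ ξ, FT f ξ = g ξ := by
  have hpi : 2 * Real.pi ≠ 0 := by positivity
  -- The exponent carries no `2π` in `FT`, but does in `𝓕`.
  let G : SchwartzMap ℝ ℂ :=
    (hc.comp_smul hpi : HasCompactSupport fun w : ℝ ↦ g ((2 * Real.pi) • w)).toSchwartzMap
      (hg.comp (contDiff_const_smul _))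
  let f : SchwartzMap ℝ ℂ := 𝓕⁻ G
  have hfG : 𝓕 f = G := FourierTransform.fourier_fourierInv_eq G
  refine ⟨f, fun ξ ↦ ?_⟩
  calc FT f ξ = 𝓕 (f : ℝ → ℂ) (ξ / (2 * Real.pi)) := by
        rw [FT, Real.fourier_real_eq_integral_exp_smul]
        congr 1 with x
        rw [smul_eq_mul]
        congr 2
        push_cast
        field_simp
    _ = G (ξ / (2 * Real.pi)) := by rw [← SchwartzMap.fourier_coe, hfG]
    _ = g ξ := by
        change g ((2 * Real.pi) • (ξ / (2 * Real.pi))) = g ξ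
        rw [smul_eq_mul, mul_div_cancel₀ _ hpi]

lemma contDiff_exp_abs_rpow_mul (m t₀ : ℝ) {n : ℕ∞} {φ : ℝ → ℝ} (hφ : ContDiff ℝ n φ)
    (h0 : (0 : ℝ) ∉ tsupport φ) :
    ContDiff ℝ n fun ξ : ℝ ↦ Complex.exp ((-(t₀ * |ξ| ^ m) : ℝ) * Complex.I) * φ ξ := by
  have hφ' : ContDiff ℝ n fun ξ ↦ (φ ξ : ℂ) := Complex.ofRealCLM.contDiff.comp hφ
  refine contDiff_iff_contDiffAt.2 fun ξ ↦ ?_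
  rcases eq_or_ne ξ 0 with rfl | hξ
  · refine (contDiffAt_const (c := 0)).congr_of_eventuallyEq ?_
    filter_upwards [notMem_tsupport_iff_eventuallyEq.1 h0] with ξ hξ
    rw [hξ, Pi.zero_apply, Complex.ofReal_zero, mul_zero]
  · have hphase : ContDiffAt ℝ n (fun ξ : ℝ ↦ -(t₀ * |ξ| ^ m)) ξ :=
      (contDiffAt_const.mul ((contDiffAt_abs hξ).rpow_const_of_ne (abs_ne_zero.mpr hξ))).neg
    have hphase' := Complex.ofRealCLM.contDiff.contDiffAt.comp ξ hphase
    exact (hphase'.mul contDiffAt_const).cexp.mul hφ'.contDiffAt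

lemma exists_bump_dyadic : ∃ c > 0, ∀ R > 0, ∃ φ : ℝ → ℝ,
    ContDiff ℝ ((⊤ : ℕ∞) : WithTop ℕ∞) φ ∧ (∀ ξ, φ ξ ∈ Icc (0 : ℝ) 1) ∧
      Function.support φ ⊆ Icc (R / 2) R ∧ ∫ ξ, φ ξ = c * R := by
  let b : ContDiffBump (3 / 4 : ℝ) := ⟨1 / 8, 1 / 4, by norm_num, by norm_num⟩
  refine ⟨∫ ξ, b ξ, b.integral_pos, fun R hR ↦ ⟨fun ξ ↦ b (ξ / R), ?_, ?_, ?_, ?_⟩⟩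
  · exact b.contDiff.comp (contDiff_id.div_const R)
  · exact fun ξ ↦ ⟨b.nonneg, b.le_one⟩
  · intro ξ hξ
    have hmem : ξ / R ∈ Metric.ball (3 / 4 : ℝ) (1 / 4) := b.support_eq ▸ hξ
    rw [Metric.mem_ball, Real.dist_eq, abs_lt] at hmem
    have hlow : 1 / 2 < ξ / R := by linarith [hmem.1]
    have hupp : ξ / R < 1 := by linarith [hmem.2]
    rw [lt_div_iff₀ hR] at hlow
    rw [div_lt_iff₀ hR] at hupp
    constructor <;> linarith
  · rw [Measure.integral_comp_div, abs_of_pos hR, smul_eq_mul, mul_comm]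

lemma one_add_sq_rpow_le_s16 {ξ R : ℝ} (hR : 1 ≤ R) (hξ : ξ ∈ Icc (R / 2) R) (s : ℝ) :
    (1 + ξ ^ 2) ^ s ≤ (2 ^ |s| * R ^ s) ^ 2 := by
  have hR0 : 0 < R := by linarith
  obtain ⟨hξ1, hξ2⟩ := hξ
  rcases le_total 0 s with hs | hs
  · calc (1 + ξ ^ 2) ^ s ≤ ((2 * R) ^ 2) ^ s := by gcongr; nlinarith
      _ = (2 ^ |s| * R ^ s) ^ 2 := by
        rw [abs_of_nonneg hs, ← Real.mul_rpow two_pos.le hR0.le, Real.rpow_pow_comm (by positivity)]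
  · calc (1 + ξ ^ 2) ^ s ≤ ((R / 2) ^ 2) ^ s :=
          Real.rpow_le_rpow_of_nonpos (by positivity) (by nlinarith) hs
      _ = (2 ^ |s| * R ^ s) ^ 2 := by
        rw [abs_of_nonpos hs, ← Real.rpow_pow_comm (by positivity),
          Real.div_rpow hR0.le two_pos.le, Real.rpow_neg two_pos.le, div_eq_inv_mul]

lemma HsNorm_le_of_support_FT_subset {s R : ℝ} (hR : 1 ≤ R) {f : ℝ → ℂ}
    (hf : ∀ ξ, ‖FT f ξ‖ ≤ 1) (hsupp : Function.support (FT f) ⊆ Icc (R / 2) R) :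
    HsNorm s f ≤ ENNReal.ofReal (2 ^ |s| * R ^ (s + 1 / 2)) := by
  have hR0 : 0 < R := by linarith
  have hpt (ξ : ℝ) : ENNReal.ofReal ((1 + ξ ^ 2) ^ s) * (‖FT f ξ‖₊ : ℝ≥0∞) ^ 2 ≤
      (Icc (R / 2) R).indicator (fun _ ↦ ENNReal.ofReal ((2 ^ |s| * R ^ s) ^ 2)) ξ := by
    by_cases hξ : ξ ∈ Icc (R / 2) R
    · rw [indicator_of_mem hξ]
      calc _ ≤ ENNReal.ofReal ((1 + ξ ^ 2) ^ s) * 1 ^ 2 := by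
            gcongr
            exact_mod_cast hf ξ
        _ ≤ _ := by
            rw [one_pow, mul_one]
            exact ENNReal.ofReal_le_ofReal (one_add_sq_rpow_le_s16 hR hξ s)
    · rw [indicator_of_notMem hξ, Function.notMem_support.1 fun h ↦ hξ (hsupp h)]
      simp
  have hsq : (2 ^ |s| * R ^ s) ^ 2 * R = (2 ^ |s| * R ^ (s + 1 / 2)) ^ 2 := by
    rw [Real.rpow_add hR0, ← mul_assoc, mul_pow _ (R ^ (1 / 2 : ℝ)), ← Real.sqrt_eq_rpow,
      Real.sq_sqrt hR0.le]
  rw [HsNorm, one_div (2 : ℝ), ENNReal.rpow_inv_le_iff two_pos, ENNReal.rpow_two, ← one_div (2 : ℝ),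
    ← ENNReal.ofReal_pow (by positivity), ← hsq]
  calc _ ≤ ∫⁻ ξ, (Icc (R / 2) R).indicator
          (fun _ ↦ ENNReal.ofReal ((2 ^ |s| * R ^ s) ^ 2)) ξ := lintegral_mono hpt
    _ = ENNReal.ofReal ((2 ^ |s| * R ^ s) ^ 2 * (R - R / 2)) := by
        rw [lintegral_indicator_const measurableSet_Icc, Real.volume_Icc,
          ENNReal.ofReal_mul (by positivity)]
    _ ≤ _ := by gcongr; linarith

lemma exists_schwartzMap_focusing {m : ℝ} (hm : 0 ≤ m) (t₀ : ℝ) : ∃ c > 0, ∀ R ≥ 1,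
    ∃ f : SchwartzMap ℝ ℂ, (∀ t, |t - t₀| * R ^ m ≤ 1 → c * R ≤ ‖uF m f 0 t‖) ∧
      ∀ s, HsNorm s f ≤ ENNReal.ofReal (2 ^ |s| * R ^ (s + 1 / 2)) := by
  obtain ⟨c, hc, hbump⟩ := exists_bump_dyadic
  refine ⟨c / (4 * Real.pi), by positivity, fun R hR ↦ ?_⟩
  have hR0 : 0 < R := by linarith
  obtain ⟨φ, hφ, hφ01, hsupp, hint⟩ := hbump R hR0
  have hφc : HasCompactSupport φ := .of_support_subset_isCompact isCompact_Icc hsupp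
  have h0 : (0 : ℝ) ∉ tsupport φ := fun h ↦ by
    linarith [(closure_minimal hsupp isClosed_Icc h).1]
  obtain ⟨f, hf⟩ := exists_schwartzMap_FT_eq (contDiff_exp_abs_rpow_mul m t₀ hφ h0)
    (hφc.comp_left Complex.ofReal_zero).mul_left
  refine ⟨f, fun t ht ↦ ?_, fun s ↦ HsNorm_le_of_support_FT_subset hR (fun ξ ↦ ?_) fun ξ hξ ↦ ?_⟩
  · rw [div_mul_eq_mul_div, ← hint]
    refine integral_div_le_norm_uF_zero (hφ.continuous.integrable_of_hasCompactSupport hφc)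
      (fun ξ ↦ (hφ01 ξ).1) hf fun ξ hξ ↦ ?_
    obtain ⟨hξ1, hξ2⟩ := hsupp hξ
    calc |(t - t₀) * |ξ| ^ m| = |t - t₀| * |ξ| ^ m := by
          rw [abs_mul, abs_of_nonneg (a := |ξ| ^ m) (by positivity)]
      _ ≤ |t - t₀| * R ^ m := by
          gcongr
          exact abs_le.2 ⟨by linarith, hξ2⟩
      _ ≤ 1 := ht
  · rw [hf, norm_mul, Complex.norm_exp_ofReal_mul_I, one_mul, Complex.norm_real,
      Real.norm_of_nonneg (hφ01 ξ).1]
    exact (hφ01 ξ).2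
  · refine hsupp fun hφξ ↦ hξ ?_
    rw [hf, hφξ, Complex.ofReal_zero, mul_zero]

end TestFunctions

section Packing

lemma volume_biUnion_Ico_mul_add {a δ : ℝ} (ha : 0 ≤ a) {F : Finset ℝ}
    (hF : (F : Set ℝ).Pairwise fun x y ↦ δ ≤ dist x y) :
    volume (⋃ θ ∈ F, Ico (a * θ) (a * (θ + δ))) = F.card * ENNReal.ofReal (a * δ) := by
  have hdisj : (F : Set ℝ).PairwiseDisjoint fun θ ↦ Ico (a * θ) (a * (θ + δ)) := by
    refine fun x hx y hy hxy ↦ Set.disjoint_left.2 fun z hzx hzy ↦ (hF hx hy hxy).not_gt ?_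
    have hyx : y < x + δ := lt_of_mul_lt_mul_left (hzy.1.trans_lt hzx.2) ha
    have hxy : x < y + δ := lt_of_mul_lt_mul_left (hzx.1.trans_lt hzy.2) ha
    exact abs_sub_lt_iff.2 ⟨by linarith, by linarith⟩
  rw [measure_biUnion_finset hdisj fun _ _ ↦ measurableSet_Ico]
  simp only [Real.volume_Ico, ← mul_sub, add_sub_cancel_left, Finset.sum_const, nsmul_eq_mul]

lemma enorm_uF_zero_le_lineMaximal {m θ t : ℝ} {Θ : Set ℝ} (f : ℝ → ℂ) (ht : t ∈ Ioo (0 : ℝ) 1)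
    (hθ : θ ∈ Θ) : ‖uF m f 0 t‖ₑ ≤ lineMaximal m Θ f (θ * t) := by
  refine le_iSup₂_of_le t ht (le_iSup₂_of_le θ hθ ?_)
  rw [sub_self, enorm_eq_nnnorm]

lemma exists_mul_eq_of_mem_Ico {θ δ x : ℝ} (hθ : θ ∈ Icc (1 / 2 : ℝ) 1) (hδ : 0 ≤ δ)
    (hx : x ∈ Ico (1 / 2 * θ) (1 / 2 * (θ + δ))) : ∃ t ∈ Ico (1 / 2) (1 / 2 + δ), θ * t = x := by
  have hθ0 : 0 < θ := by linarith [hθ.1]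
  refine ⟨x / θ, ⟨?_, ?_⟩, mul_div_cancel₀ x hθ0.ne'⟩
  · rw [le_div_iff₀ hθ0]
    exact hx.1
  · rw [div_lt_iff₀ hθ0]
    nlinarith [hx.2, hθ.1]

lemma card_mul_le_lintegral_lineMaximal_rpow {m q δ : ℝ} (hq : 0 ≤ q) (hδ : δ ∈ Icc (0 : ℝ) (1 / 2))
    {Θ : Set ℝ} {F : Finset ℝ} (hFΘ : (F : Set ℝ) ⊆ Θ ∩ Icc (1 / 2) 1)
    (hF : (F : Set ℝ).Pairwise fun x y ↦ δ ≤ dist x y) {f : ℝ → ℂ} {M : ℝ≥0∞}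
    (hM : ∀ t ∈ Ico (1 / 2) (1 / 2 + δ), M ≤ ‖uF m f 0 t‖ₑ) :
    M ^ q * (F.card * ENNReal.ofReal (1 / 2 * δ)) ≤
      ∫⁻ x in Ioo (0 : ℝ) 1, lineMaximal m Θ f x ^ q := by
  set E : Set ℝ := ⋃ θ ∈ F, Ico (1 / 2 * θ) (1 / 2 * (θ + δ)) with hE
  have hEmeas : MeasurableSet E := F.measurableSet_biUnion fun _ _ ↦ measurableSet_Ico
  have hE_large : ∀ x ∈ E, x ∈ Ioo (0 : ℝ) 1 ∧ M ≤ lineMaximal m Θ f x := by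
    intro x hx
    obtain ⟨θ, hθF, hxθ⟩ := mem_iUnion₂.1 hx
    obtain ⟨hθΘ, hθ⟩ := hFΘ hθF
    obtain ⟨t, ht, rfl⟩ := exists_mul_eq_of_mem_Ico hθ hδ.1 hxθ
    have ht01 : t ∈ Ioo (0 : ℝ) 1 := ⟨by linarith [ht.1], by linarith [ht.2, hδ.2]⟩
    have hθ0 : 0 < θ := by linarith [hθ.1]
    exact ⟨⟨mul_pos hθ0 ht01.1, mul_lt_one_of_nonneg_of_lt_one_right hθ.2 ht01.1.le ht01.2⟩,
      (hM t ht).trans (enorm_uF_zero_le_lineMaximal f ht01 hθΘ)⟩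
  calc M ^ q * (F.card * ENNReal.ofReal (1 / 2 * δ)) = ∫⁻ _ in E, M ^ q := by
        rw [setLIntegral_const, hE, volume_biUnion_Ico_mul_add (by norm_num) hF]
    _ ≤ ∫⁻ x in E, lineMaximal m Θ f x ^ q :=
        setLIntegral_mono' hEmeas fun x hx ↦ ENNReal.rpow_le_rpow (hE_large x hx).2 hq
    _ ≤ _ := lintegral_mono_set fun x hx ↦ (hE_large x hx).1

lemma exists_mul_rpow_card_le_of_lineMaximalEstimate {m q : ℝ} (hm : 0 ≤ m) (hq : 0 < q) (s : ℝ) :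
    ∃ A > 0, ∀ {Θ : Set ℝ} {C : ℝ}, 0 ≤ C → LineMaximalEstimate m q s Θ C →
      ∀ {R δ : ℝ}, 1 ≤ R → δ ∈ Icc (0 : ℝ) (1 / 2) → δ * R ^ m ≤ 1 →
      ∀ {F : Finset ℝ}, (F : Set ℝ) ⊆ Θ ∩ Icc (1 / 2) 1 →
      (F : Set ℝ).Pairwise (fun x y ↦ δ ≤ dist x y) →
      A * R * (F.card * δ) ^ (1 / q) ≤ C * R ^ (s + 1 / 2) := by
  obtain ⟨c, hc, hfocus⟩ := exists_schwartzMap_focusing hm (1 / 2)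
  refine ⟨c * (1 / 2) ^ (1 / q) / 2 ^ |s|, by positivity, ?_⟩
  intro Θ C hC hest R δ hR hδ hδR F hFΘ hF
  have hδ0 : 0 ≤ δ := hδ.1
  obtain ⟨f, hlarge, hHs⟩ := hfocus R hR
  have hM : ∀ t ∈ Ico (1 / 2) (1 / 2 + δ), ENNReal.ofReal (c * R) ≤ ‖uF m f 0 t‖ₑ := by
    intro t ht
    rw [← ofReal_norm]
    refine ENNReal.ofReal_le_ofReal (hlarge t (le_trans ?_ hδR))
    gcongr
    exact abs_le.2 ⟨by linarith [ht.1], by linarith [ht.2]⟩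
  have hlow : ENNReal.ofReal (c * R * (F.card * (1 / 2 * δ)) ^ (1 / q)) ≤
      (∫⁻ x in Ioo (0 : ℝ) 1, lineMaximal m Θ f x ^ q) ^ (1 / q) := by
    rw [one_div q, ENNReal.le_rpow_inv_iff hq, ENNReal.ofReal_rpow_of_nonneg (by positivity) hq.le,
      Real.mul_rpow (by positivity) (by positivity), Real.rpow_inv_rpow (by positivity) hq.ne',
      ENNReal.ofReal_mul (by positivity), ENNReal.ofReal_mul (by positivity),
      ENNReal.ofReal_natCast, ← ENNReal.ofReal_rpow_of_nonneg (by positivity) hq.le]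
    exact card_mul_le_lintegral_lineMaximal_rpow hq.le hδ hFΘ hF hM
  have hmain : c * R * (F.card * (1 / 2 * δ)) ^ (1 / q) ≤ C * (2 ^ |s| * R ^ (s + 1 / 2)) := by
    rw [← ENNReal.ofReal_le_ofReal_iff (by positivity), ENNReal.ofReal_mul hC]
    exact hlow.trans ((hest f).trans (by gcongr; exact hHs s))
  rw [mul_left_comm, Real.mul_rpow (by norm_num) (by positivity)] at hmain
  rw [div_mul_eq_mul_div, div_mul_eq_mul_div, div_le_iff₀ (by positivity)]
  linarith

lemma eventually_mul_rpow_lt {γ ε : ℝ} (hγ : 0 < γ) (C : ℝ) (hε : 0 < ε) :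
    ∀ᶠ δ in 𝓝[>] (0 : ℝ), C * δ ^ γ < ε := by
  have hlim : Tendsto (fun δ : ℝ ↦ C * δ ^ γ) (𝓝 0) (𝓝 (C * 0 ^ γ)) :=
    (Real.continuousAt_rpow_const 0 γ (.inr hγ.le)).const_mul C
  rw [Real.zero_rpow hγ.ne', mul_zero] at hlim
  exact (hlim.mono_left nhdsWithin_le_nhds).eventually_lt_const hε

theorem not_exists_lineMaximalEstimate_of_packing {m q s β c : ℝ} (hm : 0 < m) (hq : 0 < q)
    (hs : s < 1 / 2 - m / q + m * β / q) (hc : 0 < c) {Θ : Set ℝ}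
    (hΘ : ∃ᶠ δ in 𝓝[>] (0 : ℝ), ∃ F : Finset ℝ, (F : Set ℝ) ⊆ Θ ∩ Icc (1 / 2) 1 ∧
      (F : Set ℝ).Pairwise (fun x y ↦ δ ≤ dist x y) ∧ c * δ ^ (-β) ≤ F.card) :
    ¬ ∃ C > 0, LineMaximalEstimate m q s Θ C := by
  rintro ⟨C, hC, hest⟩
  obtain ⟨A, hA, hpacking⟩ := exists_mul_rpow_card_le_of_lineMaximalEstimate hm.le hq s
  set γ : ℝ := (1 / 2 - m / q + m * β / q - s) / m with hγ
  have hγ0 : 0 < γ := div_pos (by linarith) hm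
  have hsmall : ∀ᶠ δ in 𝓝[>] (0 : ℝ), C * δ ^ γ < A * c ^ (1 / q) :=
    eventually_mul_rpow_lt hγ0 C (by positivity)
  have hrange : ∀ᶠ δ in 𝓝[>] (0 : ℝ), δ ∈ Ioo (0 : ℝ) (1 / 2) := Ioo_mem_nhdsGT (by norm_num)
  obtain ⟨δ, ⟨F, hFΘ, hF, hcard⟩, hδC, hδ0, hδ⟩ := (hΘ.and_eventually (hsmall.and hrange)).exists
  have hR : (1 : ℝ) ≤ δ ^ (-(1 / m)) :=
    Real.one_le_rpow_of_pos_of_le_one_of_nonpos hδ0 (by linarith) (by simp [hm.le])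
  have hδR : δ * (δ ^ (-(1 / m))) ^ m ≤ 1 := by
    rw [← Real.rpow_mul hδ0.le, neg_mul, one_div_mul_cancel hm.ne', Real.rpow_neg_one,
      mul_inv_cancel₀ hδ0.ne']
  refine hδC.not_ge ?_
  calc A * c ^ (1 / q)
      = A * δ ^ (-(1 / m)) * (c * δ ^ (-β) * δ) ^ (1 / q) * δ ^ ((s + 1 / 2) / m + γ) := by
        have hexp : -(1 / m) + (-β + 1) * (1 / q) + ((s + 1 / 2) / m + γ) = 0 := by
          rw [hγ]
          field_simp
          ring
        have hpow := congrArg (δ ^ ·) hexp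
        simp only [Real.rpow_add hδ0 _ ((s + 1 / 2) / m + γ), Real.rpow_add hδ0 (-(1 / m)),
          Real.rpow_zero] at hpow
        rw [mul_assoc c, ← Real.rpow_add_one hδ0.ne', Real.mul_rpow hc.le (by positivity),
          ← Real.rpow_mul hδ0.le]
        linear_combination -(A * c ^ (1 / q)) * hpow
    _ ≤ A * δ ^ (-(1 / m)) * (F.card * δ) ^ (1 / q) * δ ^ ((s + 1 / 2) / m + γ) := by gcongr
    _ ≤ C * (δ ^ (-(1 / m))) ^ (s + 1 / 2) * δ ^ ((s + 1 / 2) / m + γ) :=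
        mul_le_mul_of_nonneg_right (hpacking hC.le hest hR ⟨hδ0.le, hδ.le⟩ hδR hFΘ hF)
          (by positivity)
    _ = C * δ ^ γ := by
        rw [← Real.rpow_mul hδ0.le, mul_assoc, ← Real.rpow_add hδ0]
        ring_nf

end Packing

section CantorSet

/-- The two contractions `x ↦ r x` and `x ↦ 1 - r + r x` generating the `r`-Cantor set, indexed by
the leading digit that they prepend. -/
def cantorMap (r : ℝ) (b : Bool) (x : ℝ) : ℝ :=
  (if b then 1 - r else 0) + r * x

variable {r : ℝ}

lemma summable_digits (hr0 : 0 ≤ r) (hr1 : r < 1) (a : ℕ → Bool) :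
    Summable fun n ↦ if a n then (1 - r) * r ^ n else 0 :=
  have hterm (n : ℕ) : 0 ≤ (1 - r) * r ^ n := mul_nonneg (by linarith) (by positivity)
  ((summable_geometric_of_lt_one hr0 hr1).mul_left (1 - r)).of_nonneg_of_le
    (fun n ↦ by split_ifs <;> simp [hterm]) fun n ↦ by split_ifs <;> simp [hterm]

lemma cantorMap_mem_rCantorSet (hr0 : 0 ≤ r) (hr1 : r < 1) (b : Bool) {x : ℝ}
    (hx : x ∈ rCantorSet r) : cantorMap r b x ∈ rCantorSet r := by
  obtain ⟨a, rfl⟩ := hx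
  let a' : ℕ → Bool := fun n ↦ Nat.casesOn n b a
  refine ⟨a', ?_⟩
  rw [cantorMap, (summable_digits hr0 hr1 a').tsum_eq_zero_add, ← tsum_mul_left]
  congr 1
  · simp [a']
  · refine tsum_congr fun n ↦ ?_
    rw [mul_ite, mul_zero, pow_succ']
    exact if_congr Iff.rfl (by ring) rfl

lemma zero_mem_rCantorSet (r : ℝ) : (0 : ℝ) ∈ rCantorSet r := ⟨fun _ ↦ false, by simp⟩

lemma cantorMap_injective (hr : r ≠ 0) (b : Bool) : Function.Injective (cantorMap r b) :=
  (add_right_injective _).comp (mul_right_injective₀ hr)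

lemma dist_cantorMap (hr : 0 ≤ r) (b : Bool) (x y : ℝ) :
    dist (cantorMap r b x) (cantorMap r b y) = r * dist x y := by
  rw [cantorMap, cantorMap, dist_add_left, Real.dist_eq, ← mul_sub, abs_mul, abs_of_nonneg hr,
    Real.dist_eq]

lemma pairwise_le_dist_image_cantorMap (hr : 0 < r) (b : Bool) {δ : ℝ} {F : Set ℝ}
    (hF : F.Pairwise fun x y ↦ δ ≤ dist x y) :
    (cantorMap r b '' F).Pairwise fun x y ↦ r * δ ≤ dist x y := by
  refine (cantorMap_injective hr.ne' b).injOn.pairwise_image.2 fun x hx y hy hxy ↦ ?_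
  rw [Function.onFun, dist_cantorMap hr.le]
  exact mul_le_mul_of_nonneg_left (hF hx hy hxy) hr.le

lemma cantorMap_false_mem_Icc (hr : 0 ≤ r) {ε x : ℝ} (hx : x ∈ Icc 0 (1 - ε)) :
    cantorMap r false x ∈ Icc 0 (r - r * ε) := by
  simp only [cantorMap, Bool.false_eq_true, if_false, zero_add]
  exact ⟨mul_nonneg hr hx.1, (mul_le_mul_of_nonneg_left hx.2 hr).trans_eq (by ring)⟩

lemma cantorMap_true_mem_Icc (hr : 0 ≤ r) {ε x : ℝ} (hx : x ∈ Icc 0 (1 - ε)) :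
    cantorMap r true x ∈ Icc (1 - r) (1 - r * ε) := by
  simp only [cantorMap, if_true]
  have hlow := mul_nonneg hr hx.1
  have hupp := mul_le_mul_of_nonneg_left hx.2 hr
  constructor <;> linarith

lemma mul_le_dist_cantorMap_false_true (hr0 : 0 ≤ r) (hr1 : r ≤ 1 / 2) {ε x y : ℝ}
    (hx : x ∈ Icc 0 (1 - ε)) (hy : y ∈ Icc 0 (1 - ε)) :
    r * ε ≤ dist (cantorMap r false x) (cantorMap r true y) := by
  rw [dist_comm, Real.dist_eq]
  have hleft := (cantorMap_false_mem_Icc hr0 hx).2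
  have hright := (cantorMap_true_mem_Icc hr0 hy).1
  exact le_trans (by linarith) (le_abs_self _)

lemma exists_finset_subset_rCantorSet (hr0 : 0 < r) (hr1 : r ≤ 1 / 2) (k : ℕ) :
    ∃ F : Finset ℝ, F.card = 2 ^ k ∧ (F : Set ℝ) ⊆ rCantorSet r ∩ Icc 0 (1 - r ^ k) ∧
      (F : Set ℝ).Pairwise fun x y ↦ r ^ k ≤ dist x y := by
  induction k with
  | zero => exact ⟨{0}, by simp [zero_mem_rCantorSet]⟩
  | succ k ih =>
    obtain ⟨F, hcard, hF, hsep⟩ := ih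
    rw [pow_succ' r]
    have hpow : 0 < r * r ^ k := by positivity
    have hmem (b : Bool) : ∀ x ∈ F, cantorMap r b x ∈ rCantorSet r :=
      fun x hx ↦ cantorMap_mem_rCantorSet hr0.le (by linarith) b (hF hx).1
    have hleft : ∀ x ∈ F, cantorMap r false x ∈ Icc 0 (r - r * r ^ k) :=
      fun x hx ↦ cantorMap_false_mem_Icc hr0.le (hF hx).2
    have hright : ∀ x ∈ F, cantorMap r true x ∈ Icc (1 - r) (1 - r * r ^ k) :=
      fun x hx ↦ cantorMap_true_mem_Icc hr0.le (hF hx).2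
    have hgap : ∀ x ∈ F, ∀ y ∈ F, r * r ^ k ≤ dist (cantorMap r false x) (cantorMap r true y) :=
      fun x hx y hy ↦ mul_le_dist_cantorMap_false_true hr0.le hr1 (hF hx).2 (hF hy).2
    refine ⟨F.image (cantorMap r false) ∪ F.image (cantorMap r true), ?_, ?_, ?_⟩
    · rw [Finset.card_union_of_disjoint, Finset.card_image_of_injective _
        (cantorMap_injective hr0.ne' _), Finset.card_image_of_injective _
        (cantorMap_injective hr0.ne' _), hcard, pow_succ, mul_two]
      simp only [Finset.disjoint_left, Finset.mem_image, not_exists, not_and, forall_exists_index,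
        and_imp, forall_apply_eq_imp_iff₂]
      exact fun x hx y hy hxy ↦ hpow.not_ge ((hgap x hx y hy).trans (by rw [hxy, dist_self]))
    · simp only [Finset.coe_union, Finset.coe_image, union_subset_iff, image_subset_iff]
      exact ⟨fun x hx ↦ ⟨hmem _ x hx, (hleft x hx).1, (hleft x hx).2.trans (by linarith)⟩,
        fun x hx ↦ ⟨hmem _ x hx, le_trans (by linarith) (hright x hx).1, (hright x hx).2⟩⟩
    · have : Std.Symm fun x y : ℝ ↦ r * r ^ k ≤ dist x y := ⟨fun x y h ↦ by rwa [dist_comm]⟩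
      have hcopy (b : Bool) := pairwise_le_dist_image_cantorMap hr0 b hsep
      rw [Finset.coe_union, Finset.coe_image, Finset.coe_image]
      refine pairwise_union_of_symm.2 ⟨hcopy false, hcopy true, ?_⟩
      rintro _ ⟨x, hx, rfl⟩ _ ⟨y, hy, rfl⟩ -
      exact hgap x hx y hy

lemma rpow_neg_log_two_div_log_inv (hr0 : 0 < r) (hr1 : r < 1) :
    r ^ (-(Real.log 2 / Real.log (1 / r))) = 2 := by
  have hinv : 1 < 1 / r := by rwa [one_lt_div hr0]
  rw [Real.rpow_neg_eq_inv_rpow, ← one_div, Real.log_div_log,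
    Real.rpow_logb (by positivity) hinv.ne' two_pos]

lemma exists_packing_rCantorSet (hr0 : 0 < r) (hr1 : r ≤ 1 / 2) (k : ℕ) :
    ∃ F : Finset ℝ, (F : Set ℝ) ⊆ rCantorSet r ∩ Icc (1 / 2) 1 ∧
      (F : Set ℝ).Pairwise (fun x y ↦ r ^ (k + 1) ≤ dist x y) ∧
      1 / 2 * (r ^ (k + 1)) ^ (-(Real.log 2 / Real.log (1 / r))) ≤ F.card := by
  obtain ⟨F, hcard, hF, hsep⟩ := exists_finset_subset_rCantorSet hr0 hr1 k
  refine ⟨F.image (cantorMap r true), ?_, ?_, ?_⟩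
  · rw [Finset.coe_image, image_subset_iff]
    intro x hx
    have hright := cantorMap_true_mem_Icc hr0.le (hF hx).2
    have hpow : 0 ≤ r * r ^ k := by positivity
    exact ⟨cantorMap_mem_rCantorSet hr0.le (by linarith) _ (hF hx).1,
      le_trans (by linarith) hright.1, hright.2.trans (by linarith)⟩
  · rw [Finset.coe_image, pow_succ']
    exact pairwise_le_dist_image_cantorMap hr0 _ hsep
  · rw [Finset.card_image_of_injective _ (cantorMap_injective hr0.ne' _), hcard,
      ← Real.rpow_pow_comm hr0.le, rpow_neg_log_two_div_log_inv hr0 (by linarith), pow_succ]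
    push_cast
    linarith

end CantorSet

theorem stmt16_general {m q r s : ℝ} (hm : 0 < m) (hq : 0 < q) (hr0 : 0 < r) (hr1 : r ≤ 1 / 2)
    (hs : s < 1 / 2 - m / q + m * (Real.log 2 / Real.log (1 / r)) / q) :
    ¬ ∃ C > 0, LineMaximalEstimate m q s (rCantorSet r) C := by
  have hpow : Tendsto (fun k : ℕ ↦ r ^ (k + 1)) atTop (𝓝[>] 0) :=
    tendsto_nhdsWithin_iff.2
      ⟨(tendsto_add_atTop_iff_nat 1).2 (tendsto_pow_atTop_nhds_zero_of_lt_one hr0.le (by linarith)),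
        .of_forall fun k ↦ by simpa using pow_pos hr0 (k + 1)⟩
  exact not_exists_lineMaximalEstimate_of_packing hm hq hs one_half_pos
    (hpow.frequently (.of_forall (exists_packing_rCantorSet hr0 hr1)))

/-- Sharpness along the `r`-Cantor set `Θ` of Minkowski dimension `β = log 2 / log(1/r)`:
if `s < 1/2 − m/q + mβ/q` then no constant `C` works in the maximal estimate along the
lines generated by `Θ`. -/
theorem stmt16 (m q r s : ℝ) (hm : 0 < m) (hm1 : m < 1) (hq : 2 ≤ q)
    (hr0 : 0 < r) (hr1 : r < 1/2)
    (hs : s < 1/2 - m / q + m * (Real.log 2 / Real.log (1/r)) / q) :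
    ¬ ∃ C > 0, ∀ f : SchwartzMap ℝ ℂ,
      (∫⁻ x in Set.Ioo (0:ℝ) 1,
          (⨆ t ∈ Set.Ioo (0:ℝ) 1,
            ⨆ θ ∈ {y : ℝ | ∃ a : ℕ → Bool,
                y = ∑' n : ℕ, (if a n then (1 - r) * r ^ n else 0)},
            (‖uF m (⇑f) (x - θ * t) t‖₊ : ℝ≥0∞)) ^ q) ^ (1 / q) ≤
        ENNReal.ofReal C * HsNorm s (⇑f) :=
  stmt16_general hm (by linarith) hr0 hr1.le hs
end
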